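/- Every class A operator A ∈ B(H) on a complex Hilbert space H is normaloid, i.e., its operator norm equals its spectral radius. -/

import Mathlib

open ContinuousLinearMap Filter

set_option synthInstance.maxHeartbeats 400000

/-- The `p`-th power of an operator (intended for positive operators), via the
continuous functional calculus. -/
noncomputable def opRpow {H : Type*} [NormedAddCommGroup H] [InnerProductSpace ℂ H]
    [CompleteSpace H] (A : H →L[ℂ] H) (p : ℝ) : H →L[ℂ] H :=
  cfc (fun x : ℝ => x ^ p) A

/-- The logarithm of an operator (intended for positive invertible operators), via the
continuous functional calculus. -/
noncomputable def opLog {H : Type*} [NormedAddCommGroup H] [InnerProductSpace ℂ H]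
    [CompleteSpace H] (A : H →L[ℂ] H) : H →L[ℂ] H :=
  cfc Real.log A

/-- `|A| = (A*A)^{1/2}`, via the continuous functional calculus. -/
noncomputable def opAbs {H : Type*} [NormedAddCommGroup H] [InnerProductSpace ℂ H]
    [CompleteSpace H] (A : H →L[ℂ] H) : H →L[ℂ] H :=
  cfc (fun x : ℝ => Real.sqrt x) (adjoint A * A)

/-- `A` is hyponormal: `A*A ≥ AA*`. -/
def Hyponormal {H : Type*} [NormedAddCommGroup H] [InnerProductSpace ℂ H]
    [CompleteSpace H] (A : H →L[ℂ] H) : Prop :=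
  A * adjoint A ≤ adjoint A * A

/-- `A` is `p`-hyponormal: `(A*A)^p ≥ (AA*)^p`. -/
def PHyponormal {H : Type*} [NormedAddCommGroup H] [InnerProductSpace ℂ H]
    [CompleteSpace H] (A : H →L[ℂ] H) (p : ℝ) : Prop :=
  opRpow (A * adjoint A) p ≤ opRpow (adjoint A * A) p

/-- `A` is `(p,k)`-quasihyponormal: `A*^k ((A*A)^p − (AA*)^p) A^k ≥ 0`. -/
def PKQuasihyponormal {H : Type*} [NormedAddCommGroup H] [InnerProductSpace ℂ H]
    [CompleteSpace H] (A : H →L[ℂ] H) (p : ℝ) (k : ℕ) : Prop :=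
  0 ≤ (adjoint A) ^ k * (opRpow (adjoint A * A) p - opRpow (A * adjoint A) p) * A ^ k

/-- `A` is log-hyponormal: `A` invertible and `log(A*A) ≥ log(AA*)`. -/
def LogHyponormal {H : Type*} [NormedAddCommGroup H] [InnerProductSpace ℂ H]
    [CompleteSpace H] (A : H →L[ℂ] H) : Prop :=
  IsUnit A ∧ opLog (A * adjoint A) ≤ opLog (adjoint A * A)

/-- `A` is a class A operator: `|A²| ≥ |A|²`. -/
def ClassA {H : Type*} [NormedAddCommGroup H] [InnerProductSpace ℂ H]
    [CompleteSpace H] (A : H →L[ℂ] H) : Prop :=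
  opAbs A ^ 2 ≤ opAbs (A ^ 2)

/-- `A` is paranormal: `‖Ax‖² ≤ ‖A²x‖ ‖x‖` for all `x`. -/
def Paranormal {H : Type*} [NormedAddCommGroup H] [InnerProductSpace ℂ H]
    (A : H →L[ℂ] H) : Prop :=
  ∀ x : H, ‖A x‖ ^ 2 ≤ ‖A (A x)‖ * ‖x‖

/-- `A` is normaloid: its norm equals its spectral radius. -/
def Normaloid {H : Type*} [NormedAddCommGroup H] [InnerProductSpace ℂ H]
    (A : H →L[ℂ] H) : Prop :=
  spectralRadius ℂ A = ‖A‖₊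

/-- `T` has Bishop's property (β): whenever `(T - z) fₙ(z) → 0` uniformly on compact subsets
of an open set `D ⊆ ℂ`, for analytic `H`-valued functions `fₙ` on `D`, also `fₙ → 0`
uniformly on compact subsets of `D`. -/
def HasBishopBeta {H : Type*} [NormedAddCommGroup H] [InnerProductSpace ℂ H]
    (T : H →L[ℂ] H) : Prop :=
  ∀ D : Set ℂ, IsOpen D → ∀ f : ℕ → ℂ → H,
    (∀ n, AnalyticOnNhd ℂ (f n) D) →
    (∀ K : Set ℂ, K ⊆ D → IsCompact K →
      TendstoUniformlyOn (fun n z => T (f n z) - z • f n z) 0 atTop K) →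
    ∀ K : Set ℂ, K ⊆ D → IsCompact K →
      TendstoUniformlyOn (fun n z => f n z) 0 atTop K

/-- `T` has the single valued extension property: there is no nonzero analytic `H`-valued
function `f` on a nonempty open `D ⊆ ℂ` with `(T - z) f(z) ≡ 0` on `D`. -/
def HasSVEP {H : Type*} [NormedAddCommGroup H] [InnerProductSpace ℂ H]
    (T : H →L[ℂ] H) : Prop :=
  ∀ D : Set ℂ, IsOpen D → D.Nonempty → ∀ f : ℂ → H,
    AnalyticOnNhd ℂ f D → (∀ z ∈ D, T (f z) - z • f z = 0) →
    ∀ z ∈ D, f z = 0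

/-- The restriction of `A` to an invariant subspace `M`, as an operator on `M`. -/
noncomputable def restrictOp {H : Type*} [NormedAddCommGroup H] [InnerProductSpace ℂ H]
    (A : H →L[ℂ] H) (M : Submodule ℂ H) (h : ∀ x ∈ M, A x ∈ M) : M →L[ℂ] M :=
  (A.comp M.subtypeL).codRestrict M (fun x => h x x.2)

theorem opAbs_sa_aux {H : Type*} [NormedAddCommGroup H] [InnerProductSpace ℂ H]
    [CompleteSpace H] (A : H →L[ℂ] H) : IsSelfAdjoint (opAbs A) := by
  unfold opAbs
  exact cfc_predicate _ _

theorem opAbs_sq_aux {H : Type*} [NormedAddCommGroup H] [InnerProductSpace ℂ H]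
    [CompleteSpace H] (A : H →L[ℂ] H) : opAbs A ^ 2 = adjoint A * A := by
  have h0 : (0 : H →L[ℂ] H) ≤ adjoint A * A := star_mul_self_nonneg A
  have hsa : IsSelfAdjoint (adjoint A * A) := IsSelfAdjoint.of_nonneg h0
  unfold opAbs
  rw [← cfc_pow (fun x : ℝ => Real.sqrt x) 2 (adjoint A * A)
    (Real.continuous_sqrt.continuousOn)]
  conv_rhs => rw [← cfc_id' ℝ (adjoint A * A)]
  apply cfc_congr
  intro x hx
  exact Real.sq_sqrt (spectrum_nonneg_of_nonneg h0 hx)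

theorem norm_opAbs_aux {H : Type*} [NormedAddCommGroup H] [InnerProductSpace ℂ H]
    [CompleteSpace H] (A : H →L[ℂ] H) (x : H) : ‖opAbs A x‖ = ‖A x‖ := by
  have h1 : inner ℂ ((opAbs A ^ 2) x) x = inner ℂ (opAbs A x) (opAbs A x) := by
    rw [pow_two, ContinuousLinearMap.mul_apply]
    nth_rewrite 1 [← (opAbs_sa_aux A).adjoint_eq]
    rw [adjoint_inner_left]
  rw [opAbs_sq_aux, ContinuousLinearMap.mul_apply, adjoint_inner_left,
    inner_self_eq_norm_sq_to_K, inner_self_eq_norm_sq_to_K] at h1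
  have h2 : ‖A x‖ ^ 2 = ‖opAbs A x‖ ^ 2 := by exact_mod_cast h1
  exact ((sq_eq_sq₀ (norm_nonneg _) (norm_nonneg _)).1 h2).symm

theorem paranormal_aux {H : Type*} [NormedAddCommGroup H] [InnerProductSpace ℂ H]
    [CompleteSpace H] (A : H →L[ℂ] H) (hA : ClassA A) : Paranormal A := by
  intro x
  unfold ClassA at hA
  rw [ContinuousLinearMap.le_def, opAbs_sq_aux] at hA
  have h := hA.re_inner_nonneg_left x
  rw [ContinuousLinearMap.sub_apply, inner_sub_left, map_sub, ContinuousLinearMap.mul_apply,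
    adjoint_inner_left, inner_self_eq_norm_sq] at h
  have h2 := re_inner_le_norm (𝕜 := ℂ) (opAbs (A ^ 2) x) x
  rw [norm_opAbs_aux] at h2
  have h3 : (A ^ 2) x = A (A x) := by rw [pow_two, ContinuousLinearMap.mul_apply]
  rw [h3] at h2
  linarith

theorem pow_aux {H : Type*} [NormedAddCommGroup H] [InnerProductSpace ℂ H]
    (A : H →L[ℂ] H) (hA : Paranormal A) (n : ℕ) :
    ‖A ^ (n + 1)‖ ^ 2 ≤ ‖A ^ (n + 2)‖ * ‖A ^ n‖ := by
  have h0 : 0 ≤ ‖A ^ (n + 2)‖ * ‖A ^ n‖ := by positivity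
  rw [← Real.le_sqrt (norm_nonneg _) h0]
  refine ContinuousLinearMap.opNorm_le_bound _ (Real.sqrt_nonneg _) fun x => ?_
  have h := hA ((A ^ n) x)
  have e1 : A ((A ^ n) x) = (A ^ (n + 1)) x := by rw [pow_succ' A n]; rfl
  have e2 : A ((A ^ (n + 1)) x) = (A ^ (n + 2)) x := by rw [pow_succ' A (n + 1)]; rfl
  rw [e1, e2] at h
  refine (sq_le_sq₀ (norm_nonneg _) (by positivity)).1 ?_
  rw [mul_pow, Real.sq_sqrt h0]
  calc _ ≤ _ := h
    _ ≤ (‖A ^ (n + 2)‖ * ‖x‖) * (‖A ^ n‖ * ‖x‖) := by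
      gcongr <;> exact ContinuousLinearMap.le_opNorm _ _
    _ = _ := by ring

theorem pow_le_aux {H : Type*} [NormedAddCommGroup H] [InnerProductSpace ℂ H]
    (A : H →L[ℂ] H) (hA : Paranormal A) (h0 : 0 < ‖A‖) (n : ℕ) :
    0 < ‖A ^ n‖ ∧ ‖A‖ * ‖A ^ n‖ ≤ ‖A ^ (n + 1)‖ := by
  induction n with
  | zero =>
    have h1 : ‖(1 : H →L[ℂ] H)‖ ≤ 1 := ContinuousLinearMap.norm_id_le
    refine ⟨?_, ?_⟩
    · rw [norm_pos_iff, pow_zero]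
      intro h
      have : A = 0 := by rw [← mul_one A, h, mul_zero]
      simp [this] at h0
    · rw [pow_zero, zero_add, pow_one]
      nlinarith
  | succ n ih =>
    obtain ⟨ih1, ih2⟩ := ih
    have h1 : 0 < ‖A ^ (n + 1)‖ := lt_of_lt_of_le (by positivity) ih2
    refine ⟨h1, ?_⟩
    have h := pow_aux A hA n
    refine le_of_mul_le_mul_right ?_ ih1
    calc ‖A‖ * ‖A ^ (n + 1)‖ * ‖A ^ n‖ = ‖A ^ (n + 1)‖ * (‖A‖ * ‖A ^ n‖) := by ring
      _ ≤ ‖A ^ (n + 1)‖ * ‖A ^ (n + 1)‖ := by gcongr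
      _ ≤ _ := by rw [← pow_two]; exact h

theorem norm_pow_aux {H : Type*} [NormedAddCommGroup H] [InnerProductSpace ℂ H]
    (A : H →L[ℂ] H) (hA : Paranormal A) (h0 : 0 < ‖A‖) (n : ℕ) :
    ‖A‖ ^ (n + 1) ≤ ‖A ^ (n + 1)‖ := by
  induction n with
  | zero => simp
  | succ n ih =>
    calc ‖A‖ ^ (n + 1 + 1) = ‖A‖ * ‖A‖ ^ (n + 1) := by ring
      _ ≤ ‖A‖ * ‖A ^ (n + 1)‖ := by gcongr
      _ ≤ _ := (pow_le_aux A hA h0 (n + 1)).2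

theorem classA_normaloid {H : Type*} [NormedAddCommGroup H]
    [InnerProductSpace ℂ H] [CompleteSpace H]
    (A : H →L[ℂ] H) (hA : ClassA A) : Normaloid A := by
  unfold Normaloid
  by_cases hz : A = 0
  · subst hz
    simp
  have h0 : 0 < ‖A‖ := norm_pos_iff.2 hz
  have hP := paranormal_aux A hA
  have : Nontrivial (H →L[ℂ] H) := ⟨A, 0, hz⟩
  have : Nontrivial H := by
    by_contra hn
    rw [not_nontrivial_iff_subsingleton] at hn
    exact hz (Subsingleton.elim _ _)
  apply le_antisymm (spectrum.spectralRadius_le_nnnorm A)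
  refine ge_of_tendsto (spectrum.pow_nnnorm_pow_one_div_tendsto_nhds_spectralRadius A) ?_
  filter_upwards [eventually_gt_atTop 0] with n hn
  obtain ⟨m, rfl⟩ := Nat.exists_eq_succ_of_ne_zero hn.ne'
  have h : ‖A‖₊ ^ (m + 1) ≤ ‖A ^ (m + 1)‖₊ := norm_pow_aux A hP h0 m
  have hpos : (0 : ℝ) < ((m + 1 : ℕ) : ℝ) := by positivity
  rw [Nat.succ_eq_add_one, one_div, ENNReal.le_rpow_inv_iff hpos, ENNReal.rpow_natCast]
  exact_mod_cast h
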